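/- Let q be a prime, p = 2q+1 prime, g a unit of ℤ/pℤ, s ∈ ℕ, h = gˢ, γ ∈ (0,1), and n ≥ 1. Let x₁,…,xₙ be nonzero real numbers and δ₁,…,δₙ real numbers such that for each i the quantity x̌_i := γ⁻¹(x_i + γδ_i) + p·1_{x_i<0} is an integer lying in {1,…,q} when x_i > 0 and in {q+1,…,p−1} when x_i < 0, and the residue of x̌_i modulo p is a unit. If −q−1 < γ⁻ⁿ·∏_{i=1}^n (x_i + γδ_i) ≤ q, then for any randomness values r₁,…,rₙ ∈ ℕ, applying Dcd_{γⁿ} to the ElGamal decryption of the Hadamard product of the n ciphertexts (g^{r_i}, x̌_i·h^{r_i}) yields exactly ∏_{i=1}^n (x_i + γδ_i). -/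

import Mathlib

open BigOperators

/-! Decryption is a group homomorphism `G × G →* G` inverting encryption, so the Hadamard product
of the ciphertexts decrypts to the product of the plaintexts. Subtracting the wrap-around term from
each encoding leaves the integer `γ⁻¹ (xᵢ + γ δᵢ)` with the same residue, so the decrypted unit is
the residue of the integer `γ⁻ⁿ ∏ (xᵢ + γ δᵢ)`. By the range hypothesis this integer is the
representative of least absolute value, which is what the decoder returns. -/

namespace ElGamal

variable {G : Type*}

/-- ElGamal encryption of `m` under the public key `(g, h)` with randomness `r`. Ciphertexts are
elements of `G × G`, so their Hadamard product is the multiplication of the product group. -/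
def encrypt [Monoid G] (g h m : G) (r : ℕ) : G × G :=
  (g ^ r, m * h ^ r)

variable [CommGroup G]

/-- ElGamal decryption with the secret key `s`, bundled as a homomorphism from the group of
ciphertexts. -/
def decrypt (s : ℕ) : G × G →* G where
  toFun c := (c.1 ^ s)⁻¹ * c.2
  map_one' := by simp
  map_mul' c d := by
    rw [Prod.fst_mul, Prod.snd_mul, mul_pow, mul_inv, mul_mul_mul_comm]

theorem decrypt_apply (s : ℕ) (c : G × G) : decrypt s c = (c.1 ^ s)⁻¹ * c.2 := rfl

theorem decrypt_encrypt (g : G) (s : ℕ) (m : G) (r : ℕ) :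
    decrypt s (encrypt g (g ^ s) m r) = m := by
  rw [decrypt_apply, encrypt, pow_right_comm, mul_comm, mul_inv_cancel_right]

theorem decrypt_prod_encrypt {ι : Type*} (t : Finset ι) (g : G) (s : ℕ) (m : ι → G) (r : ι → ℕ) :
    decrypt s (∏ i ∈ t, encrypt g (g ^ s) (m i) (r i)) = ∏ i ∈ t, m i := by
  simp only [map_prod, decrypt_encrypt]

end ElGamal

/-- `m` encodes `y` at sensitivity `γ` modulo `p`: it is the residue of an integer `z` with
`y = γ z`. The choice of `z` in its residue class is left open, so that encodings multiply without
any size restriction. -/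
def IsEncoding {R : Type*} [CommRing R] {p : ℕ} (γ y : R) (m : ZMod p) : Prop :=
  ∃ z : ℤ, y = γ * z ∧ m = z

/-- The decoder `Dcd_γ`: `γ` times the integer representative of `m` of least absolute value. -/
def decode {R : Type*} [CommRing R] {p : ℕ} (γ : R) (m : ZMod p) : R :=
  γ * m.valMinAbs

theorem decode_eq_mul_val_sub_indicator {R : Type*} [CommRing R] {p q : ℕ} (hp : p = 2 * q + 1)
    (γ : R) (m : ZMod p) :
    decode γ m = γ * (m.val - p * if q < m.val then 1 else 0) := by
  have : NeZero p := ⟨by lia⟩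
  have half_eq : p / 2 = q := by lia
  rw [decode, ZMod.valMinAbs_def_pos, half_eq]
  rcases le_or_gt m.val q with hle | hlt
  · simp [hle, hle.not_gt]
  · simp [hlt, hlt.not_ge]

namespace IsEncoding

protected theorem prod {R ι : Type*} [CommRing R] {p : ℕ} {t : Finset ι} {γ y : ι → R}
    {m : ι → ZMod p} (h : ∀ i ∈ t, IsEncoding (γ i) (y i) (m i)) :
    IsEncoding (∏ i ∈ t, γ i) (∏ i ∈ t, y i) (∏ i ∈ t, m i) := by
  choose! z hy hm using h
  refine ⟨∏ i ∈ t, z i, ?_, ?_⟩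
  · rw [Finset.prod_congr rfl hy, Finset.prod_mul_distrib, Int.cast_prod]
  · rw [Finset.prod_congr rfl hm, Int.cast_prod]

theorem of_eq_inv_mul_add {K : Type*} [Field K] {p : ℕ} {γ y : K} (hγ : γ ≠ 0) {z k : ℤ}
    (hz : (z : K) = γ⁻¹ * y + p * k) : IsEncoding γ y (z : ZMod p) := by
  refine ⟨z - p * k, ?_, by simp⟩
  push_cast
  rw [hz, add_sub_cancel_right, mul_inv_cancel_left₀ hγ]

theorem decode_eq {K : Type*} [Field K] [LinearOrder K] [IsStrictOrderedRing K] {p q : ℕ}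
    (hp : p = 2 * q + 1) {γ y : K} {m : ZMod p} (hm : IsEncoding γ y m) (hγ : γ ≠ 0)
    (hlower : -(q : K) - 1 < γ⁻¹ * y) (hupper : γ⁻¹ * y ≤ q) : decode γ m = y := by
  have : NeZero p := ⟨by lia⟩
  obtain ⟨z, rfl, rfl⟩ := hm
  rw [inv_mul_cancel_left₀ hγ] at hlower hupper
  have lower : -(q : ℤ) - 1 < z := by exact_mod_cast hlower
  have upper : z ≤ q := by exact_mod_cast hupper
  have valMinAbs_eq : (z : ZMod p).valMinAbs = z :=
    (ZMod.valMinAbs_spec _ _).mpr ⟨rfl, by lia, by lia⟩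
  rw [decode, valMinAbs_eq]

end IsEncoding

theorem stmt_12_general {ι K : Type*} [Fintype ι] [Field K] [LinearOrder K]
    [IsStrictOrderedRing K] {p q : ℕ} (hp : p = 2 * q + 1) {g h : (ZMod p)ˣ} {s : ℕ}
    (hh : h = g ^ s) {γ y : ι → K} (hγ : ∀ i, γ i ≠ 0) {u : ι → (ZMod p)ˣ}
    (hu : ∀ i, IsEncoding (γ i) (y i) (u i : ZMod p))
    (hrange : -(q : K) - 1 < (∏ i, γ i)⁻¹ * ∏ i, y i ∧ (∏ i, γ i)⁻¹ * ∏ i, y i ≤ q)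
    (r : ι → ℕ) :
    decode (∏ i, γ i)
      ((ElGamal.decrypt s (∏ i, ElGamal.encrypt g h (u i) (r i)) : (ZMod p)ˣ) : ZMod p) =
      ∏ i, y i := by
  rw [hh, ElGamal.decrypt_prod_encrypt, Units.coe_prod]
  exact (IsEncoding.prod fun i _ ↦ hu i).decode_eq hp
    (Finset.prod_ne_zero_iff.mpr fun i _ ↦ hγ i) hrange.1 hrange.2

/-- ElGamal-based confidential multiplication: decoding (at sensitivity γⁿ) the ElGamal
decryption of the Hadamard product of the ciphertexts (g^{rᵢ}, x̌ᵢ·h^{rᵢ}) of the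
encodings x̌ᵢ = γ⁻¹(xᵢ + γδᵢ) + p·1_{xᵢ<0} recovers exactly ∏ (xᵢ + γδᵢ), provided
γ⁻ⁿ·∏ (xᵢ + γδᵢ) ∈ (−q−1, q], where q is prime and p = 2q+1 is a (safe) prime. -/
theorem stmt_12 (q : ℕ) (hqp : q.Prime) (p : ℕ) [Fact p.Prime] (hp : p = 2 * q + 1)
    (g : (ZMod p)ˣ) (s : ℕ) (h : (ZMod p)ˣ) (hh : h = g ^ s)
    (γ : ℝ) (hγ : 0 < γ ∧ γ < 1) (n : ℕ) (hn : 1 ≤ n)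
    (x δ : Fin n → ℝ) (hx : ∀ i, x i ≠ 0)
    (xc : Fin n → ℤ)
    (hxc : ∀ i, (xc i : ℝ) = γ⁻¹ * (x i + γ * δ i) + (p : ℝ) * (if x i < 0 then 1 else 0))
    (hpos : ∀ i, 0 < x i → 1 ≤ xc i ∧ xc i ≤ (q : ℤ))
    (hneg : ∀ i, x i < 0 → (q : ℤ) < xc i ∧ xc i ≤ 2 * (q : ℤ))
    (u : Fin n → (ZMod p)ˣ) (hu : ∀ i, (u i : ZMod p) = ((xc i : ℤ) : ZMod p))
    (hrange : -(q : ℝ) - 1 < (γ ^ n)⁻¹ * ∏ i, (x i + γ * δ i) ∧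
              (γ ^ n)⁻¹ * ∏ i, (x i + γ * δ i) ≤ (q : ℝ))
    (r : Fin n → ℕ) :
    γ ^ n * (((((((∏ i, g ^ r i) ^ s)⁻¹ * ∏ i, (u i * h ^ r i) : (ZMod p)ˣ) :
        ZMod p).val : ℝ) -
      (p : ℝ) * (if q < ((((∏ i, g ^ r i) ^ s)⁻¹ * ∏ i, (u i * h ^ r i) : (ZMod p)ˣ) :
        ZMod p).val then 1 else 0))) =
      ∏ i, (x i + γ * δ i) := by
  have encodes (i : Fin n) : IsEncoding γ (x i + γ * δ i) (u i : ZMod p) :=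
    hu i ▸ .of_eq_inv_mul_add hγ.1.ne' (k := if x i < 0 then 1 else 0) (by exact_mod_cast hxc i)
  simpa only [decode_eq_mul_val_sub_indicator hp, ElGamal.decrypt_apply, ElGamal.encrypt,
    Prod.fst_prod, Prod.snd_prod, Fin.prod_const] using
    stmt_12_general hp hh (fun _ ↦ hγ.1.ne') encodes (by simpa only [Fin.prod_const] using hrange) r
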